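/- Let C be a centrally symmetric convex body in ℝ³ and let h be a unit vector. Then the critical determinant of C satisfies Δ(C) ≤ Δ(C ∩ h^⊥) · max_{x∈C} ⟨x, h⟩, where C ∩ h^⊥ is the central planar section of C by the plane through the origin orthogonal to h and Δ(C ∩ h^⊥) is its two-dimensional critical determinant computed inside the plane h^⊥. -/

import Mathlib

open MeasureTheory Set Matrix Pointwise

noncomputable section

/-- The lattice `A · ℤⁿ` associated with an (invertible) matrix `A`. -/
def latticeOf {n : ℕ} (A : Matrix (Fin n) (Fin n) ℝ) : Set (Fin n → ℝ) :=
  Set.range fun m : Fin n → ℤ => A.mulVec fun i => (m i : ℝ)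

/-- `Λ + K` is non-separable: every affine hyperplane `{y | ⟨u,y⟩ = c}` (with `u ≠ 0`)
meets `x + K` for some `x ∈ Λ`. -/
def NonSeparable {n : ℕ} (Λ K : Set (Fin n → ℝ)) : Prop :=
  ∀ u : Fin n → ℝ, u ≠ 0 → ∀ c : ℝ, ∃ x ∈ Λ, ∃ y ∈ K, u ⬝ᵥ (x + y) = c

/-- `d_{n,n-1}(K)`: the smallest density `|K|/d(Λ)` of a non-separable
lattice of translates of `K`. -/
def dTrans {n : ℕ} (K : Set (Fin n → ℝ)) : ℝ :=
  sInf {d : ℝ | ∃ A : Matrix (Fin n) (Fin n) ℝ, A.det ≠ 0 ∧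
    NonSeparable (latticeOf A) K ∧ d = (volume K).toReal / |A.det|}

/-- A set `Λ` is `K`-admissible if it meets the interior of `K` only in `0`. -/
def Admissible {n : ℕ} (Λ K : Set (Fin n → ℝ)) : Prop :=
  Λ ∩ interior K = {0}

/-- The critical determinant `Δ(K)`: the smallest determinant of a `K`-admissible lattice. -/
def critDet {n : ℕ} (K : Set (Fin n → ℝ)) : ℝ :=
  sInf {d : ℝ | ∃ A : Matrix (Fin n) (Fin n) ℝ, A.det ≠ 0 ∧
    Admissible (latticeOf A) K ∧ d = |A.det|}

/-- The densest lattice packing density `δ_L(K) = |K| / (2ⁿ Δ(K))` of a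
centrally symmetric convex body `K ⊆ ℝⁿ`. -/
def deltaL {n : ℕ} (K : Set (Fin n → ℝ)) : ℝ :=
  (volume K).toReal / (2 ^ n * critDet K)

/-- The two-dimensional critical determinant of a planar section `C ∩ h^⊥`, computed
inside the plane `h^⊥`: the infimum of areas of fundamental parallelograms (given by the
Euclidean norm of the cross product of the generators) of planar lattices in `h^⊥`
meeting the relative interior of `C ∩ h^⊥` only in `0`. -/
def planarCritDet (C : Set (Fin 3 → ℝ)) (h : Fin 3 → ℝ) : ℝ :=
  sInf {d : ℝ | ∃ v₁ v₂ : Fin 3 → ℝ, v₁ ⬝ᵥ h = 0 ∧ v₂ ⬝ᵥ h = 0 ∧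
    crossProduct v₁ v₂ ≠ 0 ∧
    (Set.range fun mn : ℤ × ℤ => (mn.1 : ℝ) • v₁ + (mn.2 : ℝ) • v₂) ∩
      intrinsicInterior ℝ (C ∩ {x | x ⬝ᵥ h = 0}) = {0} ∧
    d = Real.sqrt (crossProduct v₁ v₂ ⬝ᵥ crossProduct v₁ v₂)}

/-!
Let `v₁, v₂` span a lattice in `h^⊥` admissible for the section `C ∩ h^⊥`, let `M` be the supremum
of `⟨·, h⟩` on `C`, and stack copies of the planar lattice at height `M`, i.e. consider
`ℤ v₁ + ℤ v₂ + ℤ M h`. An interior point of `C` has height strictly between `-M` and `M`, so a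
lattice point in the interior of `C` lies in `h^⊥`, where it must vanish. The determinant of the
stacked lattice is the planar one times `M`; take the infimum over planar lattices.
-/

section Topology

theorem lt_csSup_image_of_mem_interior {X α : Type*} [TopologicalSpace X]
    [ConditionallyCompleteLinearOrder α] [TopologicalSpace α] [OrderTopology α] [DenselyOrdered α]
    [NoMaxOrder α] {f : X → α} (hf : IsOpenMap f) {s : Set X} (hs : BddAbove (f '' s)) {x : X}
    (hx : x ∈ interior s) : f x < sSup (f '' s) := by
  have hsub : f '' s ⊆ Iic (sSup (f '' s)) := fun _ hy => le_csSup hs hy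
  have hfx : f x ∈ interior (Iic (sSup (f '' s))) :=
    interior_mono hsub (hf.image_interior_subset s (mem_image_of_mem f hx))
  rwa [interior_Iic] at hfx

theorem bddAbove_image_of_isBounded {X α : Type*} [PseudoMetricSpace X] [ProperSpace X]
    [LinearOrder α] [TopologicalSpace α] [OrderTopology α] [Nonempty α] {f : X → α}
    (hf : Continuous f) {s : Set X} (hs : Bornology.IsBounded s) : BddAbove (f '' s) :=
  (hs.isCompact_closure.image hf).bddAbove.mono (image_mono subset_closure)

theorem neg_mem_interior_of_eq_neg {G : Type*} [TopologicalSpace G] [InvolutiveNeg G]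
    [ContinuousNeg G] {s : Set G} (hs : s = -s) {x : G} (hx : x ∈ interior s) :
    -x ∈ interior s := by
  have hsub : -interior s ⊆ s := (Set.neg_subset_neg.2 interior_subset).trans hs.symm.subset
  exact interior_maximal hsub isOpen_interior.neg (by rwa [Set.mem_neg, neg_neg])

theorem zero_mem_interior_of_convex_of_eq_neg {E : Type*} [AddCommGroup E] [Module ℝ E]
    [TopologicalSpace E] [IsTopologicalAddGroup E] [ContinuousConstSMul ℝ E] {s : Set E}
    (hconv : Convex ℝ s) (hint : (interior s).Nonempty) (hs : s = -s) : 0 ∈ interior s := by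
  obtain ⟨x, hx⟩ := hint
  simpa using hconv.interior.midpoint_mem hx (neg_mem_interior_of_eq_neg hs hx)

theorem interior_inter_subset_intrinsicInterior {𝕜 V P : Type*} [Ring 𝕜] [AddCommGroup V]
    [Module 𝕜 V] [TopologicalSpace P] [AddTorsor V P] (s : Set P) (Q : AffineSubspace 𝕜 P) :
    interior s ∩ Q ⊆ intrinsicInterior 𝕜 (s ∩ Q) := by
  rintro x ⟨hxs, hxQ⟩
  have hspan : affineSpan 𝕜 (s ∩ Q) ≤ Q := affineSpan_le.2 inter_subset_right
  have hopen : IsOpen ((↑) ⁻¹' interior s : Set (affineSpan 𝕜 (s ∩ Q))) :=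
    isOpen_interior.preimage continuous_subtype_val
  have hsub : ((↑) ⁻¹' interior s : Set (affineSpan 𝕜 (s ∩ Q))) ⊆ (↑) ⁻¹' (s ∩ Q : Set P) :=
    fun y hy => ⟨interior_subset hy, hspan y.2⟩
  exact ⟨⟨x, subset_affineSpan 𝕜 _ ⟨interior_subset hxs, hxQ⟩⟩,
    interior_maximal hsub hopen hxs, rfl⟩

end Topology

section DotProduct

variable {n : ℕ} {C : Set (Fin n → ℝ)} {h x : Fin n → ℝ}

/-- The support function of `C` in direction `h`. It is a real supremum, hence `0` when `C` is
empty or unbounded in direction `h`. -/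
def supportFun (C : Set (Fin n → ℝ)) (h : Fin n → ℝ) : ℝ :=
  sSup {r : ℝ | ∃ x ∈ C, r = x ⬝ᵥ h}

theorem supportFun_eq_sSup_image (C : Set (Fin n → ℝ)) (h : Fin n → ℝ) :
    supportFun C h = sSup ((· ⬝ᵥ h) '' C) := by
  simp only [supportFun, image, eq_comm]

theorem ne_zero_of_dotProduct_self_eq_one (hh : h ⬝ᵥ h = 1) : h ≠ 0 := by
  rintro rfl
  exact zero_ne_one ((zero_dotProduct 0).symm.trans hh)

theorem isOpenMap_dotProduct_right (hh : h ≠ 0) : IsOpenMap fun x : Fin n → ℝ => x ⬝ᵥ h := by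
  have hne : dotProductBilin ℝ ℝ h ≠ 0 := fun h_zero =>
    hh (dotProduct_self_eq_zero.1 (LinearMap.congr_fun h_zero h))
  have hcoe : ⇑(dotProductBilin ℝ ℝ h) = (· ⬝ᵥ h) := funext (dotProduct_comm h)
  exact hcoe ▸ (dotProductBilin ℝ ℝ h).isOpenMap_of_finiteDimensional (LinearMap.surjective hne)

theorem dotProduct_lt_supportFun (hC : Bornology.IsBounded C) (hh : h ≠ 0)
    (hx : x ∈ interior C) : x ⬝ᵥ h < supportFun C h := by
  rw [supportFun_eq_sSup_image]
  exact lt_csSup_image_of_mem_interior (isOpenMap_dotProduct_right hh)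
    (bddAbove_image_of_isBounded (continuous_id.dotProduct continuous_const) hC) hx

theorem supportFun_pos (hC : Bornology.IsBounded C) (h0 : 0 ∈ interior C) (hh : h ≠ 0) :
    0 < supportFun C h := by
  simpa only [zero_dotProduct] using dotProduct_lt_supportFun hC hh h0

theorem mem_intrinsicInterior_inter_orthogonal (hx : x ∈ interior C) (hxh : x ⬝ᵥ h = 0) :
    x ∈ intrinsicInterior ℝ (C ∩ {y | y ⬝ᵥ h = 0}) := by
  have hplane : {y | y ⬝ᵥ h = 0} =
      ((LinearMap.ker (dotProductBilin ℝ ℝ h)).toAffineSubspace : Set (Fin n → ℝ)) := by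
    ext y
    simp [dotProduct_comm h]
  rw [hplane]
  exact interior_inter_subset_intrinsicInterior C _ ⟨hx, hplane ▸ hxh⟩

theorem exists_orthogonal_lt_dotProduct_self [Nontrivial (Fin n)] (h : Fin n → ℝ) (B : ℝ) :
    ∃ v : Fin n → ℝ, v ⬝ᵥ h = 0 ∧ B < v ⬝ᵥ v := by
  obtain ⟨u, hu_ne, hu⟩ := exists_ne_zero_dotProduct_eq_zero h
  have hu_pos : 0 < u ⬝ᵥ u := dotProduct_self_star_pos_iff.2 hu_ne
  obtain ⟨t, ht⟩ : ∃ t : ℝ, B / (u ⬝ᵥ u) < t * t :=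
    (Filter.tendsto_mul_self_atTop.eventually_gt_atTop _).exists
  refine ⟨t • u, by rw [smul_dotProduct, hu, smul_zero], ?_⟩
  rw [smul_dotProduct, dotProduct_smul, smul_smul, smul_eq_mul]
  exact (div_lt_iff₀ hu_pos).1 ht

end DotProduct

section CrossProduct

variable {h v v₁ v₂ : Fin 3 → ℝ}

theorem cross_eq_smul_of_orthogonal (hh : h ⬝ᵥ h = 1) (h₁ : v₁ ⬝ᵥ h = 0) (h₂ : v₂ ⬝ᵥ h = 0) :
    v₁ ⨯₃ v₂ = ((v₁ ⨯₃ v₂) ⬝ᵥ h) • h := by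
  have hparallel : v₁ ⨯₃ v₂ ⨯₃ h = 0 := by
    rw [cross_cross_eq_smul_sub_smul, h₁, h₂, zero_smul, zero_smul, sub_zero]
  have hexpand := cross_cross_eq_smul_sub_smul' h (v₁ ⨯₃ v₂) h
  rw [hparallel, map_zero, hh, one_smul] at hexpand
  exact sub_eq_zero.1 hexpand.symm

theorem abs_det_of_orthogonal (hh : h ⬝ᵥ h = 1) (h₁ : v₁ ⬝ᵥ h = 0) (h₂ : v₂ ⬝ᵥ h = 0)
    (w : Fin 3 → ℝ) :
    |(Matrix.of ![v₁, v₂, w])ᵀ.det| = √((v₁ ⨯₃ v₂) ⬝ᵥ (v₁ ⨯₃ v₂)) * |w ⬝ᵥ h| := by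
  have hdet : (Matrix.of ![v₁, v₂, w])ᵀ.det = w ⬝ᵥ (v₁ ⨯₃ v₂) := by
    rw [det_transpose, triple_product_permutation, triple_product_eq_det]
    rfl
  rw [hdet, cross_eq_smul_of_orthogonal hh h₁ h₂]
  simp only [dotProduct_smul, smul_dotProduct, hh, smul_eq_mul, mul_one, abs_mul,
    Real.sqrt_mul_self_eq_abs]

theorem cross_cross_self_of_orthogonal (hv : v ⬝ᵥ h = 0) :
    v ⨯₃ (h ⨯₃ v) = (v ⬝ᵥ v) • h := by
  rw [cross_cross_eq_smul_sub_smul', dotProduct_comm h, hv, zero_smul, sub_zero]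

theorem dotProduct_self_smul_add_smul_cross (hh : h ⬝ᵥ h = 1) (hv : v ⬝ᵥ h = 0) (a b : ℝ) :
    (a • v + b • h ⨯₃ v) ⬝ᵥ (a • v + b • h ⨯₃ v) = (a ^ 2 + b ^ 2) * (v ⬝ᵥ v) := by
  have hnorm : (h ⨯₃ v) ⬝ᵥ (h ⨯₃ v) = v ⬝ᵥ v := by
    rw [cross_dot_cross, hh, hv, mul_zero, one_mul, sub_zero]
  simp only [add_dotProduct, dotProduct_add, smul_dotProduct, dotProduct_smul, smul_eq_mul,
    dot_cross_self, dotProduct_comm (h ⨯₃ v) v, hnorm]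
  ring

end CrossProduct

theorem int_eq_zero_of_abs_mul_lt {k : ℤ} {M : ℝ} (hk : |k * M| < M) : k = 0 := by
  have hM : 0 < M := (abs_nonneg _).trans_lt hk
  rw [abs_mul, abs_of_pos hM, mul_lt_iff_lt_one_left hM] at hk
  exact Int.abs_lt_one_iff.1 (mod_cast hk)

theorem int_eq_zero_of_sq_add_sq_lt_one {a b : ℤ} (hab : (a : ℝ) ^ 2 + (b : ℝ) ^ 2 < 1) :
    a = 0 ∧ b = 0 := by
  have hab_int : a ^ 2 + b ^ 2 < 1 := mod_cast hab
  have ha : a ^ 2 = 0 := by linarith [sq_nonneg a, sq_nonneg b]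
  have hb : b ^ 2 = 0 := by linarith [sq_nonneg a, sq_nonneg b]
  exact ⟨sq_eq_zero_iff.1 ha, sq_eq_zero_iff.1 hb⟩

section Lattices

variable {C : Set (Fin 3 → ℝ)} {h v v₁ v₂ w : Fin 3 → ℝ}

/-- The lattice `ℤ v₁ + ℤ v₂` spanned by two vectors of `ℝ³` meets the relative interior of
`C ∩ h^⊥` only in `0`, as required of the competitors for `planarCritDet C h`. -/
def PlanarAdmissible (C : Set (Fin 3 → ℝ)) (h v₁ v₂ : Fin 3 → ℝ) : Prop :=
  (Set.range fun mn : ℤ × ℤ => (mn.1 : ℝ) • v₁ + (mn.2 : ℝ) • v₂) ∩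
    intrinsicInterior ℝ (C ∩ {x | x ⬝ᵥ h = 0}) = {0}

theorem critDet_le_abs_det {n : ℕ} {K : Set (Fin n → ℝ)} {A : Matrix (Fin n) (Fin n) ℝ}
    (hA : A.det ≠ 0) (hadm : Admissible (latticeOf A) K) : critDet K ≤ |A.det| :=
  csInf_le ⟨0, by rintro _ ⟨B, -, -, rfl⟩; exact abs_nonneg _⟩ ⟨A, hA, hadm, rfl⟩

theorem mem_latticeOf_transpose_of {x : Fin 3 → ℝ} :
    x ∈ latticeOf (Matrix.of ![v₁, v₂, w])ᵀ ↔
      ∃ m : Fin 3 → ℤ, x = (m 0 : ℝ) • v₁ + (m 1 : ℝ) • v₂ + (m 2 : ℝ) • w := by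
  simp only [latticeOf, Set.mem_range, mulVec_transpose, vecMul_eq_sum, Fin.sum_univ_three,
    eq_comm (b := x)]
  rfl

theorem admissible_latticeOf_of_planarAdmissible (hsymm : C = -C) (h0 : 0 ∈ interior C)
    (h₁ : v₁ ⬝ᵥ h = 0) (h₂ : v₂ ⬝ᵥ h = 0) (hadm : PlanarAdmissible C h v₁ v₂)
    (hw : ∀ x ∈ interior C, x ⬝ᵥ h < w ⬝ᵥ h) :
    Admissible (latticeOf (Matrix.of ![v₁, v₂, w])ᵀ) C := by
  refine eq_singleton_iff_unique_mem.2
    ⟨⟨mem_latticeOf_transpose_of.2 ⟨0, by simp⟩, h0⟩, fun x ⟨hxΛ, hxC⟩ => ?_⟩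
  obtain ⟨m, hm⟩ := mem_latticeOf_transpose_of.1 hxΛ
  have hheight : x ⬝ᵥ h = m 2 * (w ⬝ᵥ h) := by
    simp only [hm, add_dotProduct, smul_dotProduct, h₁, h₂, smul_eq_mul, mul_zero, zero_add]
  have habs : |m 2 * (w ⬝ᵥ h)| < w ⬝ᵥ h := by
    have hneg : -(x ⬝ᵥ h) < w ⬝ᵥ h :=
      neg_dotProduct x h ▸ hw (-x) (neg_mem_interior_of_eq_neg hsymm hxC)
    rw [← hheight]
    exact abs_lt.2 ⟨neg_lt.1 hneg, hw x hxC⟩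
  have hm2 : m 2 = 0 := int_eq_zero_of_abs_mul_lt habs
  rw [hm2, Int.cast_zero, zero_mul] at hheight
  rw [hm2, Int.cast_zero, zero_smul, add_zero] at hm
  exact hadm.subset
    ⟨⟨(m 0, m 1), hm.symm⟩, mem_intrinsicInterior_inter_orthogonal hxC hheight⟩

theorem critDet_le_of_planarAdmissible (hC : Bornology.IsBounded C) (h0 : 0 ∈ interior C)
    (hsymm : C = -C) (hh : h ⬝ᵥ h = 1) (h₁ : v₁ ⬝ᵥ h = 0) (h₂ : v₂ ⬝ᵥ h = 0)
    (hcross : v₁ ⨯₃ v₂ ≠ 0) (hadm : PlanarAdmissible C h v₁ v₂) :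
    critDet C ≤ √((v₁ ⨯₃ v₂) ⬝ᵥ (v₁ ⨯₃ v₂)) * supportFun C h := by
  have hh_ne : h ≠ 0 := ne_zero_of_dotProduct_self_eq_one hh
  have hM : 0 < supportFun C h := supportFun_pos hC h0 hh_ne
  have harea : 0 < √((v₁ ⨯₃ v₂) ⬝ᵥ (v₁ ⨯₃ v₂)) :=
    Real.sqrt_pos.2 (dotProduct_self_star_pos_iff.2 hcross)
  set w := supportFun C h • h
  have hw : w ⬝ᵥ h = supportFun C h := by rw [smul_dotProduct, hh, smul_eq_mul, mul_one]
  have hdet : |(Matrix.of ![v₁, v₂, w])ᵀ.det| =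
      √((v₁ ⨯₃ v₂) ⬝ᵥ (v₁ ⨯₃ v₂)) * supportFun C h := by
    rw [abs_det_of_orthogonal hh h₁ h₂, hw, abs_of_pos hM]
  rw [← hdet]
  refine critDet_le_abs_det (abs_pos.1 (hdet ▸ mul_pos harea hM)) ?_
  refine admissible_latticeOf_of_planarAdmissible hsymm h0 h₁ h₂ hadm fun x hx => ?_
  rw [hw]
  exact dotProduct_lt_supportFun hC hh_ne hx

theorem planarAdmissible_cross (h0 : 0 ∈ interior C) (hh : h ⬝ᵥ h = 1) (hv : v ⬝ᵥ h = 0)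
    (hlt : ∀ x ∈ C, x ⬝ᵥ x < v ⬝ᵥ v) : PlanarAdmissible C h v (h ⨯₃ v) := by
  refine eq_singleton_iff_unique_mem.2 ⟨⟨⟨0, by simp⟩,
    mem_intrinsicInterior_inter_orthogonal h0 (zero_dotProduct h)⟩, ?_⟩
  rintro _ ⟨⟨⟨a, b⟩, rfl⟩, hx⟩
  have hv_pos : 0 < v ⬝ᵥ v := by simpa using hlt 0 (interior_subset h0)
  have hab : ((a : ℝ) ^ 2 + (b : ℝ) ^ 2) * (v ⬝ᵥ v) < v ⬝ᵥ v := by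
    rw [← dotProduct_self_smul_add_smul_cross hh hv]
    exact hlt _ (intrinsicInterior_subset hx).1
  obtain ⟨rfl, rfl⟩ :=
    int_eq_zero_of_sq_add_sq_lt_one ((mul_lt_iff_lt_one_left hv_pos).1 hab)
  simp

/-- If there were no such lattice, `planarCritDet C h` would be `sInf ∅ = 0`. -/
theorem exists_planarAdmissible (hC : Bornology.IsBounded C) (h0 : 0 ∈ interior C)
    (hh : h ⬝ᵥ h = 1) :
    ∃ v₁ v₂ : Fin 3 → ℝ, v₁ ⬝ᵥ h = 0 ∧ v₂ ⬝ᵥ h = 0 ∧ v₁ ⨯₃ v₂ ≠ 0 ∧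
      PlanarAdmissible C h v₁ v₂ := by
  obtain ⟨B, hB⟩ := bddAbove_image_of_isBounded (continuous_id.dotProduct continuous_id) hC
  obtain ⟨v, hv, hBv⟩ := exists_orthogonal_lt_dotProduct_self h B
  have hlt : ∀ x ∈ C, x ⬝ᵥ x < v ⬝ᵥ v := fun x hx => (hB (mem_image_of_mem _ hx)).trans_lt hBv
  refine ⟨v, h ⨯₃ v, hv, by rw [dotProduct_comm, dot_self_cross], fun hcross => ?_,
    planarAdmissible_cross h0 hh hv hlt⟩
  have hv_pos : 0 < v ⬝ᵥ v := by simpa using hlt 0 (interior_subset h0)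
  have hdot : ((v ⬝ᵥ v) • h) ⬝ᵥ h = 0 := by
    rw [← cross_cross_self_of_orthogonal hv, hcross, zero_dotProduct]
  rw [smul_dotProduct, hh, smul_eq_mul, mul_one] at hdot
  exact hv_pos.ne' hdot

end Lattices

theorem critDet_le_planar_section_general {C : Set (Fin 3 → ℝ)} (hC : Bornology.IsBounded C)
    (h0 : 0 ∈ interior C) (hsymm : C = -C) {h : Fin 3 → ℝ} (hh : h ⬝ᵥ h = 1) :
    critDet C ≤ planarCritDet C h * sSup {r : ℝ | ∃ x ∈ C, r = x ⬝ᵥ h} := by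
  change critDet C ≤ planarCritDet C h * supportFun C h
  have hh_ne : h ≠ 0 := ne_zero_of_dotProduct_self_eq_one hh
  rw [← div_le_iff₀ (supportFun_pos hC h0 hh_ne)]
  refine le_csInf ?_ ?_
  · obtain ⟨v₁, v₂, h₁, h₂, hcross, hadm⟩ := exists_planarAdmissible hC h0 hh
    exact ⟨_, v₁, v₂, h₁, h₂, hcross, hadm, rfl⟩
  · rintro _ ⟨v₁, v₂, h₁, h₂, hcross, hadm, rfl⟩
    rw [div_le_iff₀ (supportFun_pos hC h0 hh_ne)]
    exact critDet_le_of_planarAdmissible hC h0 hsymm hh h₁ h₂ hcross hadm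

/-- For a centrally symmetric convex body `C ⊆ ℝ³` and a unit vector `h`:
`Δ(C) ≤ Δ(C ∩ h^⊥) · max_{x ∈ C} ⟨x, h⟩`. -/
theorem critDet_le_planar_section (C : Set (Fin 3 → ℝ))
    (hCc : IsCompact C) (hCconv : Convex ℝ C) (hCint : (interior C).Nonempty)
    (hsymm : C = -C) (h : Fin 3 → ℝ) (hh : h ⬝ᵥ h = 1) :
    critDet C ≤ planarCritDet C h * sSup {r : ℝ | ∃ x ∈ C, r = x ⬝ᵥ h} :=
  critDet_le_planar_section_general hCc.isBounded
    (zero_mem_interior_of_convex_of_eq_neg hCconv hCint hsymm) hsymm hh
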